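/- Let C be an (n+2)-angulated category with n-suspension functor Σⁿ and X an Oppermann–Thomas cluster tilting object. Let Γ = End(X). If M ∈ C has no direct summand in add ΣⁿX and X₀ → X₁ → ⋯ → Xₙ → M → ΣⁿX₀ is an (n+2)-angle with all Xᵢ ∈ add X such that applying Hom(X, −) yields the start of the minimal projective resolution of Hom(X, M), then the induced map Hom(X, X₀) → Hom(X, X₁) is injective if and only if Hom(X, M) has projective dimension at most n as a Γ-module. -/

import Mathlib

/-!
Write `Γ = (End X)ᵐᵒᵖ` and `Pᵢ = Hom(X, Xᵢ)`. Each `Pᵢ` is a finite projective `Γ`-module because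
`Xᵢ ∈ add X`, so `P₀ → ⋯ → Pₙ → Hom(X, M) → 0` is an exact sequence starting from projectives.
Shifting dimension along the images of its maps shows that `Hom(X, M)` has projective dimension at
most `n` iff the image of `P₀ → P₁` is projective.

If `P₀ → P₁` is injective, this image is isomorphic to `P₀`. Conversely, if the image is projective,
the kernel of `P₀ → P₁` is a direct summand of `P₀`, hence finite, and it is contained in the
radical of `P₀` by minimality. A maximal submodule of the kernel would pull back along the
projection to a maximal submodule of `P₀` not containing the kernel, so the kernel has no maximal
submodule and must vanish.
-/

open CategoryTheory CategoryTheory.Limits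

/-- `Y` belongs to `add X`: it is a direct summand of a finite direct sum of copies
of `X`. -/
def InAdd {C : Type} [Category C] [Preadditive C] [HasFiniteBiproducts C]
    (X Y : C) : Prop :=
  ∃ (m : ℕ) (i : Y ⟶ ⨁ fun _ : Fin m => X) (r : (⨁ fun _ : Fin m => X) ⟶ Y),
    i ≫ r = 𝟙 Y

/-- `M` is indecomposable: non-zero, and its only idempotent endomorphisms are `0`
and `𝟙 M`. -/
def Indec {C : Type} [Category C] [Preadditive C] (M : C) : Prop :=
  ¬ IsZero M ∧ ∀ e : M ⟶ M, e ≫ e = e → e = 0 ∨ e = 𝟙 M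

/-- An `(n+2)`-`Σⁿ`-sequence `A₀ → A₁ → ⋯ → A_{n+1} → Σⁿ A₀` in `C`, where
`S = Σⁿ` is the `n`-suspension functor. -/
structure NAngle {C : Type} [Category C] (S : C ⥤ C) (n : ℕ) where
  obj : Fin (n + 2) → C
  map : ∀ i : Fin (n + 1), obj i.castSucc ⟶ obj i.succ
  mapLast : obj (Fin.last (n + 1)) ⟶ S.obj (obj ⟨0, by omega⟩)

/-- A morphism of `(n+2)`-`Σⁿ`-sequences. -/
structure NAngleHom {C : Type} [Category C] {S : C ⥤ C} {n : ℕ}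
    (T T' : NAngle S n) where
  hom : ∀ i : Fin (n + 2), T.obj i ⟶ T'.obj i
  comm : ∀ i : Fin (n + 1), T.map i ≫ hom i.succ = hom i.castSucc ≫ T'.map i
  commLast : T.mapLast ≫ S.map (hom ⟨0, by omega⟩) = hom (Fin.last (n + 1)) ≫ T'.mapLast

/-- `(C, Σⁿ, Θ)` is an `(n+2)`-angulated category (we record the axioms of
Geiss–Keller–Oppermann used here: consecutive morphisms of an `(n+2)`-angle
compose to zero, every morphism extends to an `(n+2)`-angle (N1), and morphisms of
`(n+2)`-angles can be completed from their first two components (N3)). -/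
structure IsNAngulated {C : Type} [Category C] [Preadditive C] (S : C ⥤ C) (n : ℕ)
    (Θ : Set (NAngle S n)) : Prop where
  comp_zero : ∀ T ∈ Θ, ∀ i : Fin n, T.map i.castSucc ≫ T.map i.succ = 0
  comp_last_zero : ∀ T ∈ Θ, T.map (Fin.last n) ≫ T.mapLast = 0
  extend : ∀ {A₀ A₁ : C} (f : A₀ ⟶ A₁), ∃ T ∈ Θ,
    ∃ (e₀ : A₀ ≅ T.obj ⟨0, by omega⟩) (e₁ : A₁ ≅ T.obj ⟨1, by omega⟩),
      e₀.hom ≫ T.map ⟨0, by omega⟩ = f ≫ e₁.hom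
  complete : ∀ T ∈ Θ, ∀ T' ∈ Θ,
    ∀ (φ₀ : T.obj ⟨0, by omega⟩ ⟶ T'.obj ⟨0, by omega⟩)
      (φ₁ : T.obj ⟨1, by omega⟩ ⟶ T'.obj ⟨1, by omega⟩),
      T.map ⟨0, by omega⟩ ≫ φ₁ = φ₀ ≫ T'.map ⟨0, by omega⟩ →
      ∃ φ : NAngleHom T T', φ.hom ⟨0, by omega⟩ = φ₀ ∧ φ.hom ⟨1, by omega⟩ = φ₁

/-- `X` is an Oppermann–Thomas cluster tilting object: `Hom(X, ΣⁿX) = 0` and every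
object of `C` fits into an `(n+2)`-angle `X₀ → X₁ → ⋯ → Xₙ → C' → ΣⁿX₀` with all
`Xᵢ ∈ add X`. -/
structure IsOTClusterTilting {C : Type} [Category C] [Preadditive C]
    [HasFiniteBiproducts C] (S : C ⥤ C) (n : ℕ) (Θ : Set (NAngle S n))
    (X : C) : Prop where
  vanish : ∀ f : X ⟶ S.obj X, f = 0
  resolve : ∀ M : C, ∃ T ∈ Θ, (∀ i : Fin (n + 1), InAdd X (T.obj i.castSucc)) ∧
    Nonempty (T.obj (Fin.last (n + 1)) ≅ M)

/-- The hom-group `X ⟶ M` as a right module over `Γ = End X`, i.e. a left module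
over `(End X)ᵐᵒᵖ`, with action given by precomposition. -/
instance homModule {C : Type} [Category C] [Preadditive C] (X M : C) :
    Module (End X)ᵐᵒᵖ (X ⟶ M) where
  smul γ f := γ.unop ≫ f
  one_smul f := Category.id_comp f
  mul_smul γ δ f := by
    show (γ.unop ≫ δ.unop) ≫ f = γ.unop ≫ δ.unop ≫ f
    simp
  smul_zero γ := by show γ.unop ≫ (0 : X ⟶ M) = 0; simp
  smul_add γ f g := by show γ.unop ≫ (f + g) = γ.unop ≫ f + γ.unop ≫ g; simp
  add_smul γ δ f := by
    show (MulOpposite.unop (γ + δ)) ≫ f = γ.unop ≫ f + δ.unop ≫ f; simp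
  zero_smul f := by show MulOpposite.unop (0 : (End X)ᵐᵒᵖ) ≫ f = 0; simp

/-- The `(End X)ᵐᵒᵖ`-linear map `Hom(X, A) → Hom(X, B)` induced by postcomposition
with `φ : A ⟶ B`. -/
def homMap {C : Type} [Category C] [Preadditive C] (X : C) {A B : C} (φ : A ⟶ B) :
    (X ⟶ A) →ₗ[(End X)ᵐᵒᵖ] (X ⟶ B) where
  toFun f := f ≫ φ
  map_add' f g := by simp
  map_smul' γ f := by
    show (γ.unop ≫ f) ≫ φ = γ.unop ≫ f ≫ φ
    simp

/-- `M` has projective dimension at most `m` over the ring `R`. -/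
def ProjDimLE (R : Type) [Ring R] : ℕ → (M : Type) → [AddCommGroup M] → [Module R M] → Prop
  | 0, M, _, _ => Module.Projective R M
  | (m+1), M, _, _ => ∃ (P : Type) (_ : AddCommGroup P) (_ : Module R P)
      (f : P →ₗ[R] M), Module.Projective R P ∧ Function.Surjective f ∧
      ProjDimLE R m (LinearMap.ker f)

/-- The factorization ideal `I_M` of `End(ΣⁿX)`, consisting of the endomorphisms of
`ΣⁿX` factoring through `add M`, is non-zero. -/
def FactIdealNonzero {C : Type} [Category C] [Preadditive C] [HasFiniteBiproducts C]
    (S : C ⥤ C) (X M : C) : Prop :=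
  ∃ (N : C) (_ : InAdd M N) (a : S.obj X ⟶ N) (b : N ⟶ S.obj X), a ≫ b ≠ 0

/-- The radical of a module: the intersection of all its maximal submodules. -/
def ModRadical (R M : Type) [Ring R] [AddCommGroup M] [Module R M] : Submodule R M :=
  sInf {N : Submodule R M | IsCoatom N}

/-- Over `(End X)ᵐᵒᵖ`, the module `Hom(X, Y)` with `Y ∈ add X` is a retract of a finite free
module: the retraction of `Xᵐ` onto `Y` induces one of `((End X)ᵐᵒᵖ)ᵐ` onto `Hom(X, Y)`. -/
theorem projective_and_finite_of_inAdd {C : Type} [Category.{0} C] [Preadditive C]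
    [HasFiniteBiproducts C] {X Y : C} (h : InAdd X Y) :
    Module.Projective (End X)ᵐᵒᵖ (X ⟶ Y) ∧ Module.Finite (End X)ᵐᵒᵖ (X ⟶ Y) := by
  obtain ⟨m, i, r, hir⟩ := h
  let s : (X ⟶ Y) →ₗ[(End X)ᵐᵒᵖ] (Fin m → (End X)ᵐᵒᵖ) :=
    { toFun := fun f k => MulOpposite.op (f ≫ i ≫ biproduct.π (fun _ : Fin m => X) k)
      map_add' := fun f g => by
        funext k
        exact congrArg MulOpposite.op (Preadditive.add_comp _ _ _ f g _)
      map_smul' := fun γ f => by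
        funext k
        exact congrArg MulOpposite.op (Category.assoc γ.unop f _) }
  let t : (Fin m → (End X)ᵐᵒᵖ) →ₗ[(End X)ᵐᵒᵖ] (X ⟶ Y) :=
    { toFun := fun v => ∑ k, (show X ⟶ X from (v k).unop) ≫
        biproduct.ι (fun _ : Fin m => X) k ≫ r
      map_add' := fun v w => by
        rw [← Finset.sum_add_distrib]
        exact Finset.sum_congr rfl fun k _ => Preadditive.add_comp _ _ _ _ _ _
      map_smul' := fun γ v => by
        refine Eq.trans ?_ (Preadditive.comp_sum _ _ _).symm
        exact Finset.sum_congr rfl fun k _ => Category.assoc γ.unop (v k).unop _ }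
  have hts : t.comp s = LinearMap.id := by
    ext f
    change ∑ k, (f ≫ i ≫ biproduct.π (fun _ : Fin m => X) k) ≫
      biproduct.ι (fun _ : Fin m => X) k ≫ r = f
    calc _ = ∑ k, (f ≫ i) ≫ (biproduct.π (fun _ : Fin m => X) k ≫
              biproduct.ι (fun _ : Fin m => X) k) ≫ r :=
            Finset.sum_congr rfl fun k _ => by simp only [Category.assoc]
      _ = (f ≫ i) ≫ (∑ k, biproduct.π (fun _ : Fin m => X) k ≫
              biproduct.ι (fun _ : Fin m => X) k) ≫ r := by
            rw [Preadditive.sum_comp, Preadditive.comp_sum]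
      _ = f := by rw [biproduct.total, Category.id_comp, Category.assoc, hir, Category.comp_id]
  exact ⟨Module.Projective.of_split s t hts,
    Module.Finite.of_surjective t fun f => ⟨s f, LinearMap.congr_fun hts f⟩⟩

/-- Dimension shifting along an arbitrary surjection from a projective module. -/
theorem hasProjectiveDimensionLE_succ_iff_ker {R : Type} [Ring R] {P M : Type}
    [AddCommGroup P] [Module R P] [AddCommGroup M] [Module R M] [Module.Projective R P]
    (f : P →ₗ[R] M) (hf : Function.Surjective f) (m : ℕ) :
    HasProjectiveDimensionLE (ModuleCat.of R M) (m + 1) ↔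
      HasProjectiveDimensionLE (ModuleCat.of R (LinearMap.ker f)) m :=
  (LinearMap.shortExact_shortComplexKer hf).hasProjectiveDimensionLT_X₃_iff m
    ((IsProjective.iff_projective P).1 inferInstance)

theorem projDimLE_iff_hasProjectiveDimensionLE {R : Type} [Ring R] (m : ℕ) (M : Type)
    [AddCommGroup M] [Module R M] :
    ProjDimLE R m M ↔ HasProjectiveDimensionLE (ModuleCat.of R M) m := by
  induction m generalizing M with
  | zero =>
    rw [← projective_iff_hasProjectiveDimensionLE_zero, ← IsProjective.iff_projective]
    rfl
  | succ m ih =>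
    constructor
    · rintro ⟨P, _, _, f, _, hf, hk⟩
      exact (hasProjectiveDimensionLE_succ_iff_ker f hf m).2 ((ih _).1 hk)
    · intro h
      refine ⟨M →₀ R, inferInstance, inferInstance, Finsupp.linearCombination R id,
        inferInstance, Finsupp.linearCombination_id_surjective R M, (ih _).2 ?_⟩
      exact (hasProjectiveDimensionLE_succ_iff_ker _
        (Finsupp.linearCombination_id_surjective R M) m).1 h

/-- If the image of a map out of a finite module is projective, the kernel is a finite direct
summand. Lying in the radical, it equals its own radical, hence vanishes. -/
theorem ker_eq_bot_of_le_modRadical {R P Q : Type} [Ring R] [AddCommGroup P] [Module R P]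
    [AddCommGroup Q] [Module R Q] [Module.Finite R P] (f : P →ₗ[R] Q)
    [Module.Projective R (LinearMap.range f)] (hf : LinearMap.ker f ≤ ModRadical R P) :
    LinearMap.ker f = ⊥ := by
  obtain ⟨s, hs⟩ := f.rangeRestrict.exists_rightInverse_of_surjective f.range_rangeRestrict
  -- The projection of `P` onto the kernel, along the image of the section `s`.
  let p : P →ₗ[R] LinearMap.ker f :=
    (LinearMap.id - s.comp f.rangeRestrict).codRestrict (LinearMap.ker f) fun x => by
      have := congrArg Subtype.val (LinearMap.congr_fun hs (f.rangeRestrict x))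
      simp only [LinearMap.mem_ker, LinearMap.sub_apply, map_sub, LinearMap.id_apply,
        LinearMap.comp_apply] at this ⊢
      exact sub_eq_zero.2 this.symm
  have hp : ∀ x : LinearMap.ker f, p x = x := fun x => by
    have hx : f.rangeRestrict x = 0 := Subtype.ext x.2
    apply Subtype.ext
    change (x : P) - s (f.rangeRestrict x) = x
    rw [hx, map_zero, sub_zero]
  have hsurj : Function.Surjective p := fun x => ⟨x, hp x⟩
  have := Module.Finite.of_surjective p hsurj
  obtain h | ⟨N, hN, -⟩ := eq_top_or_exists_le_coatom (⊥ : Submodule R (LinearMap.ker f))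
  · refine (Submodule.eq_bot_iff _).2 fun x hx => ?_
    have : (⟨x, hx⟩ : LinearMap.ker f) ∈ (⊥ : Submodule R (LinearMap.ker f)) :=
      h ▸ Submodule.mem_top
    exact congrArg Subtype.val ((Submodule.mem_bot R).1 this)
  · refine absurd ((Submodule.eq_top_iff').2 fun x => ?_) hN.1
    have hx : (x : P) ∈ N.comap p :=
      (sInf_le ((Submodule.isCoatom_comap_iff hsurj).2 hN) : ModRadical R P ≤ _) (hf x.2)
    rwa [Submodule.mem_comap, hp] at hx

/-- Let C be an (n+2)-angulated category with n-suspension functor Σⁿ and X an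
Oppermann–Thomas cluster tilting object, Γ = End(X). If M ∈ C has no direct summand
in add ΣⁿX and X₀ → X₁ → ⋯ → Xₙ → M → ΣⁿX₀ is an (n+2)-angle with all Xᵢ ∈ add X
such that applying Hom(X, −) yields the start of the minimal projective resolution
of Hom(X, M) (i.e. the induced sequence
Hom(X, X₀) → ⋯ → Hom(X, Xₙ) → Hom(X, M) → 0 is exact and minimal, each kernel being
contained in the radical), then the induced map Hom(X, X₀) → Hom(X, X₁) is
injective if and only if Hom(X, M) has projective dimension at most n as a
Γ-module. Here M is the last object of the angle T. -/
theorem stmt_5 {C : Type} [Category C] [Preadditive C] [HasFiniteBiproducts C]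
    (n : ℕ) (e : C ≌ C) (Θ : Set (NAngle e.functor n))
    (hC : IsNAngulated e.functor n Θ)
    (X : C) (hX : IsOTClusterTilting e.functor n Θ X)
    (T : NAngle e.functor n) (hT : T ∈ Θ)
    (hadd : ∀ i : Fin (n + 1), InAdd X (T.obj i.castSucc))
    (hM' : ∀ N : C, (∃ (i : N ⟶ T.obj (Fin.last (n + 1)))
        (r : T.obj (Fin.last (n + 1)) ⟶ N), i ≫ r = 𝟙 N) →
      InAdd (e.functor.obj X) N → IsZero N)
    (hexact_end : ∀ g : X ⟶ T.obj (Fin.last (n + 1)),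
      ∃ f : X ⟶ T.obj (Fin.last n).castSucc, f ≫ T.map (Fin.last n) = g)
    (hexact_mid : ∀ (i : Fin n) (g : X ⟶ T.obj i.castSucc.succ),
      g ≫ T.map i.succ = 0 →
      ∃ f : X ⟶ T.obj i.castSucc.castSucc, f ≫ T.map i.castSucc = g)
    (hmin : ∀ p : Fin (n + 1),
      LinearMap.ker (homMap X (T.map p)) ≤
        ModRadical (End X)ᵐᵒᵖ (X ⟶ T.obj p.castSucc)) :
    Function.Injective
        (fun f : X ⟶ T.obj ⟨0, by omega⟩ => f ≫ T.map ⟨0, by omega⟩) ↔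
      ProjDimLE (End X)ᵐᵒᵖ n (X ⟶ T.obj (Fin.last (n + 1))) := by
  have hproj : ∀ i : Fin (n + 1), Module.Projective (End X)ᵐᵒᵖ (X ⟶ T.obj i.castSucc) :=
    fun i => (projective_and_finite_of_inAdd (hadd i)).1
  have hfin : Module.Finite (End X)ᵐᵒᵖ (X ⟶ T.obj (0 : Fin (n + 1)).castSucc) :=
    (projective_and_finite_of_inAdd (hadd 0)).2
  have hker : ∀ i : Fin n, LinearMap.ker (homMap X (T.map i.succ)) =
      LinearMap.range (homMap X (T.map i.castSucc)) := fun i => by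
    ext g
    constructor
    · exact fun hg => hexact_mid i g hg
    · rintro ⟨f, rfl⟩
      change (f ≫ T.map i.castSucc) ≫ T.map i.succ = 0
      rw [Category.assoc, hC.comp_zero T hT i, comp_zero]
  have hrange : LinearMap.range (homMap X (T.map (Fin.last n))) = ⊤ :=
    LinearMap.range_eq_top.2 hexact_end
  -- The image of the `j`-th map has projective dimension at most `j` iff the image of the
  -- zeroth map is projective.
  have hshift : ∀ j : Fin (n + 1),
      HasProjectiveDimensionLE
        (ModuleCat.of (End X)ᵐᵒᵖ (LinearMap.range (homMap X (T.map j)))) j ↔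
      Module.Projective (End X)ᵐᵒᵖ (LinearMap.range (homMap X (T.map 0))) := by
    intro j
    induction j using Fin.induction with
    | zero =>
      exact (projDimLE_iff_hasProjectiveDimensionLE 0 _).symm
    | succ i ih =>
      have := hproj i.succ
      have h := hasProjectiveDimensionLE_succ_iff_ker
        (homMap X (T.map i.succ)).rangeRestrict (homMap X (T.map i.succ)).surjective_rangeRestrict i
      rw [LinearMap.ker_rangeRestrict, hker] at h
      exact h.trans ih
  have hlast : ProjDimLE (End X)ᵐᵒᵖ n (X ⟶ T.obj (Fin.last (n + 1))) ↔
      Module.Projective (End X)ᵐᵒᵖ (LinearMap.range (homMap X (T.map 0))) := by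
    rw [projDimLE_iff_hasProjectiveDimensionLE, ← hshift (Fin.last n), hrange]
    let E : ModuleCat.of (End X)ᵐᵒᵖ
        (⊤ : Submodule (End X)ᵐᵒᵖ (X ⟶ T.obj (Fin.last n).succ)) ≃ₗ[(End X)ᵐᵒᵖ]
        ModuleCat.of (End X)ᵐᵒᵖ (X ⟶ T.obj (Fin.last (n + 1))) := Submodule.topEquiv
    constructor
    · intro h
      exact ModuleCat.hasProjectiveDimensionLE_of_linearEquiv E.symm n
    · intro h
      have : HasProjectiveDimensionLE (ModuleCat.of (End X)ᵐᵒᵖ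
          (⊤ : Submodule (End X)ᵐᵒᵖ (X ⟶ T.obj (Fin.last n).succ))) n := h
      exact ModuleCat.hasProjectiveDimensionLE_of_linearEquiv E n
  rw [hlast]
  change Function.Injective (homMap X (T.map 0)) ↔ _
  constructor
  · intro h
    have := hproj 0
    exact Module.Projective.of_equiv (LinearEquiv.ofInjective _ h)
  · intro h
    exact LinearMap.ker_eq_bot.1 (ker_eq_bot_of_le_modRadical _ (hmin 0))
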